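/- (Classification theorem, case Ōɠ= id) Every simple object D of Mod^ŌÜ_{/K} with Ōɠ= id is isomorphic to D(r, a) for some r ‚ąą R_b and a ‚ąą k*: writing őī/‚Ąď(r) = p^v t with gcd(t,p)=1, D(őī,n) admits a Jordan‚ÄďHŲlder filtration all of whose factors are of the form D(r, a). -/

import Mathlib

/-- The φ-semilinear operator of the φ-module `D(d, n, a)` over `K = k((u))`. -/
noncomputable def Dphi {k : Type*} [Field k]
    (φ : LaurentSeries k →+* LaurentSeries k) (d n : ℕ) (a : k)
    (x : Fin d → LaurentSeries k) : Fin d → LaurentSeries k :=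
  fun j =>
    if (j : ℕ) = 0 then
      HahnSeries.single (n : ℤ) a * φ (x ⟨d - 1, by have := j.isLt; omega⟩)
    else
      φ (x ⟨(j : ℕ) - 1, by have := j.isLt; omega⟩)

/-!
Since `φ` raises the `u`-adic absolute value to the power `b`, the limit of `‖Φⁿ x‖ ^ (1 / bⁿ)` is
an ultrametric norm `N` on `V` with `N (Φ x) = N x ^ b`. Vectors whose norms lie in distinct cosets
of `2 ^ ℤ` are independent over `k((u))`, so in finite dimension the norms along an orbit repeat
modulo `2 ^ ℤ`; hence some vector has norm `2 ^ (-r)` with `(b ^ s - 1) r ∈ ℤ` for some `s > 0`,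
that is, `r ∈ R_b`. For `δ = ℓ(r)` and `n = (b ^ δ - 1) r`, the operator `u⁻ⁿ Φ^δ` is `k`-linear on
the graded piece of radius `2 ^ (-r)`; since `k` is algebraically closed it has an eigenvector
there, and a fixed point argument lifts it to `v` with `Φ^δ v = a uⁿ v`. The norms of `v, Φ v, …,
Φ^(δ - 1) v` lie in distinct cosets, so these vectors form a basis of a `Φ`-stable subspace
isomorphic to `D(r, a)`, which is all of `V` by simplicity.
-/

section RootSequence

open Filter Topology

variable {a : ℕ → ℝ} {b : ℕ}

theorem rpow_inv_pow_succ (hb : b ≠ 0) {x : ℝ} (hx : 0 ≤ x) (n : ℕ) :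
    (x ^ b) ^ ((b ^ (n + 1) : ℕ) : ℝ)⁻¹ = x ^ ((b ^ n : ℕ) : ℝ)⁻¹ := by
  rw [pow_succ', Nat.cast_mul, mul_inv, Real.rpow_mul (by positivity),
    Real.pow_rpow_inv_natCast hx hb]

theorem antitone_rpow_inv_pow (hb : b ≠ 0) (ha : ∀ n, 0 ≤ a n) (h : ∀ n, a (n + 1) ≤ a n ^ b) :
    Antitone fun n => a n ^ ((b ^ n : ℕ) : ℝ)⁻¹ :=
  antitone_nat_of_succ_le fun n => by
    rw [← rpow_inv_pow_succ hb (ha n)]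
    exact Real.rpow_le_rpow (ha _) (h n) (by positivity)

theorem monotone_rpow_inv_pow (hb : b ≠ 0) (ha : ∀ n, 0 ≤ a n) (h : ∀ n, a n ^ b ≤ a (n + 1)) :
    Monotone fun n => a n ^ ((b ^ n : ℕ) : ℝ)⁻¹ :=
  monotone_nat_of_le_succ fun n => by
    rw [← rpow_inv_pow_succ hb (ha n)]
    exact Real.rpow_le_rpow (pow_nonneg (ha n) b) (h n) (by positivity)

theorem exists_tendsto_rpow_inv_pow (hb : 1 < b) {B : ℝ} (ha : ∀ n, 0 ≤ a n)
    (hup : ∀ n, a (n + 1) ≤ B * a n ^ b) :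
    ∃ L, Tendsto (fun n => a n ^ ((b ^ n : ℕ) : ℝ)⁻¹) atTop (𝓝 L) := by
  set C := max 1 B
  have hC : 0 < C := zero_lt_one.trans_le (le_max_left 1 B)
  have hCa (n : ℕ) : 0 ≤ C * a n := mul_nonneg hC.le (ha n)
  have hstep (n : ℕ) : C * a (n + 1) ≤ (C * a n) ^ b := by
    have hpow := pow_nonneg (ha n) b
    calc C * a (n + 1) ≤ C * (C * a n ^ b) := by
          gcongr
          exact (hup n).trans (mul_le_mul_of_nonneg_right (le_max_right 1 B) hpow)
      _ = C ^ 2 * a n ^ b := by ring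
      _ ≤ C ^ b * a n ^ b := by gcongr; exacts [le_max_left 1 B, hb]
      _ = (C * a n) ^ b := (mul_pow _ _ _).symm
  have hanti := antitone_rpow_inv_pow (zero_lt_one.trans hb).ne' hCa hstep
  have hbdd : BddBelow (Set.range fun n => (C * a n) ^ ((b ^ n : ℕ) : ℝ)⁻¹) :=
    ⟨0, Set.forall_mem_range.2 fun n => Real.rpow_nonneg (hCa n) _⟩
  have hconst : Tendsto (fun n => C ^ ((b ^ n : ℕ) : ℝ)⁻¹) atTop (𝓝 1) := by
    have hexp : Tendsto (fun n => ((b ^ n : ℕ) : ℝ)⁻¹) atTop (𝓝 0) :=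
      tendsto_inv_atTop_zero.comp <|
        tendsto_natCast_atTop_atTop.comp (tendsto_pow_atTop_atTop_of_one_lt hb)
    simpa only [Real.rpow_zero] using tendsto_const_nhds.rpow hexp (.inl hC.ne')
  refine ⟨_, ((tendsto_atTop_ciInf hanti hbdd).div hconst one_ne_zero).congr fun n => ?_⟩
  rw [Pi.div_apply, Real.mul_rpow hC.le (ha n),
    mul_div_cancel_left₀ _ (Real.rpow_pos_of_pos hC _).ne']

theorem min_one_mul_le_of_tendsto_rpow_inv_pow (hb : 1 < b) {A L : ℝ} (hA : 0 < A)
    (ha : ∀ n, 0 ≤ a n) (hlow : ∀ n, A * a n ^ b ≤ a (n + 1))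
    (hL : Tendsto (fun n => a n ^ ((b ^ n : ℕ) : ℝ)⁻¹) atTop (𝓝 L)) : min 1 A * a 0 ≤ L := by
  set C := min 1 A
  have hC : 0 < C := lt_min zero_lt_one hA
  have hC_le : C ≤ 1 := min_le_left 1 A
  have hCa (n : ℕ) : 0 ≤ C * a n := mul_nonneg hC.le (ha n)
  have hstep (n : ℕ) : (C * a n) ^ b ≤ C * a (n + 1) := by
    have hpow := pow_nonneg (ha n) b
    calc (C * a n) ^ b = C ^ b * a n ^ b := mul_pow _ _ _
      _ ≤ C ^ 2 * a n ^ b :=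
          mul_le_mul_of_nonneg_right (pow_le_pow_of_le_one hC.le hC_le hb) hpow
      _ = C * (C * a n ^ b) := by ring
      _ ≤ C * a (n + 1) := by
          gcongr
          exact (mul_le_mul_of_nonneg_right (min_le_right 1 A) hpow).trans (hlow n)
  have hmono := monotone_rpow_inv_pow (zero_lt_one.trans hb).ne' hCa hstep
  refine ge_of_tendsto' hL fun n => ?_
  calc C * a 0 = (C * a 0) ^ ((b ^ 0 : ℕ) : ℝ)⁻¹ := by simp
    _ ≤ (C * a n) ^ ((b ^ n : ℕ) : ℝ)⁻¹ := hmono n.zero_le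
    _ ≤ a n ^ ((b ^ n : ℕ) : ℝ)⁻¹ :=
        Real.rpow_le_rpow (hCa n) (mul_le_of_le_one_left (ha n) hC_le) (by positivity)

end RootSequence

section Semilinear

variable {K V ι : Type*} [Field K] [AddCommGroup V] [Module K V] {φ : K →+* K}

theorem exists_linearEquiv_equivFun_apply [Finite ι] (e : Module.Basis ι K V) {Φ : V →ₛₗ[φ] V}
    (hΦ : Submodule.span K (Set.range Φ) = ⊤) :
    ∃ M : (ι → K) ≃ₗ[K] (ι → K), ∀ x, e.equivFun (Φ x) = M (φ ∘ e.equivFun x) := by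
  have := Fintype.ofFinite ι
  have happly (x : V) : Φ x = ∑ i, φ (e.equivFun x i) • Φ (e i) := by
    conv_lhs => rw [← e.sum_equivFun x]
    simp only [map_sum, map_smulₛₗ]
  have hspan : ⊤ ≤ Submodule.span K (Set.range (Φ ∘ e)) := by
    rw [← hΦ, Submodule.span_le]
    rintro _ ⟨x, rfl⟩
    rw [happly]
    exact Submodule.sum_smul_mem _ _ fun i _ => Submodule.subset_span ⟨i, rfl⟩
  let e' := basisOfTopLeSpanOfCardEqFinrank (Φ ∘ e) hspan (Module.finrank_eq_card_basis e).symm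
  refine ⟨e'.equivFun.symm ≪≫ₗ e.equivFun, fun x => ?_⟩
  rw [LinearEquiv.trans_apply, e'.equivFun_symm_apply, happly]
  simp only [e', coe_basisOfTopLeSpanOfCardEqFinrank, Function.comp_apply]

theorem iterate_map_smulₛₗ (Φ : V →ₛₗ[φ] V) (n : ℕ) (c : K) (x : V) :
    Φ^[n] (c • x) = φ^[n] c • Φ^[n] x := by
  induction n with
  | zero => rfl
  | succ n ih => simp only [Function.iterate_succ_apply', ih, map_smulₛₗ]

theorem map_mem_span_range_iterate {Φ : V →ₛₗ[φ] V} {d : ℕ} {v : V}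
    (hv : Φ^[d] v ∈ Submodule.span K (Set.range fun i : Fin d => Φ^[i] v)) {x : V}
    (hx : x ∈ Submodule.span K (Set.range fun i : Fin d => Φ^[i] v)) :
    Φ x ∈ Submodule.span K (Set.range fun i : Fin d => Φ^[i] v) := by
  suffices hle : Submodule.span K (Set.range fun i : Fin d => Φ^[i] v) ≤
      (Submodule.span K (Set.range fun i : Fin d => Φ^[i] v)).comap Φ from hle hx
  rw [Submodule.span_le]
  rintro _ ⟨i, rfl⟩
  rw [SetLike.mem_coe, Submodule.mem_comap, ← Function.iterate_succ_apply' Φ]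
  obtain hlt | heq := (Nat.succ_le_of_lt i.isLt).lt_or_eq
  · exact Submodule.subset_span ⟨⟨_, hlt⟩, rfl⟩
  · rwa [heq]

end Semilinear

theorem norm_iterate_eq_pow {E : Type*} [Norm E] {f : E → E} {b : ℕ}
    (hf : ∀ x, ‖f x‖ = ‖x‖ ^ b) (n : ℕ) (x : E) : ‖f^[n] x‖ = ‖x‖ ^ b ^ n := by
  induction n with
  | zero => simp
  | succ n ih => rw [Function.iterate_succ_apply', hf, ih, ← pow_mul, ← pow_succ]

theorem norm_iterate_eq_two_rpow {E : Type*} [Norm E] {f : E → E} {b : ℕ}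
    (hf : ∀ x, ‖f x‖ = ‖x‖ ^ b) {α : ℝ} {x : E} (hx : ‖x‖ = 2 ^ (-α)) (i : ℕ) :
    ‖f^[i] x‖ = 2 ^ (-((b : ℝ) ^ i * α)) := by
  rw [norm_iterate_eq_pow hf, hx, ← Real.rpow_mul_natCast zero_le_two, Nat.cast_pow, neg_mul,
    mul_comm]

section Coordinates

variable {K V ι : Type*} [NontriviallyNormedField K] {φ : K →+* K} {b : ℕ} [Fintype ι]

theorem norm_comp_eq_pow (hb : b ≠ 0) (hφ : ∀ f, ‖φ f‖ = ‖f‖ ^ b) (y : ι → K) :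
    ‖φ ∘ y‖ = ‖y‖ ^ b := by
  have hφ' (f : K) : ‖φ f‖₊ = ‖f‖₊ ^ b := NNReal.eq (hφ f)
  have hsup := Finset.apply_sup_eq_sup_comp_of_linearOrder (s := Finset.univ) (f := (‖y ·‖₊))
    (· ^ b) (pow_left_mono b) (zero_pow hb)
  rw [← coe_nnnorm, ← coe_nnnorm, ← NNReal.coe_pow, Pi.nnnorm_def, Pi.nnnorm_def, hsup]
  simp only [Function.comp_def, hφ']

theorem exists_norm_equivFun_le [CompleteSpace K] [AddCommGroup V] [Module K V]
    (e : Module.Basis ι K V) (hb : b ≠ 0) (hφ : ∀ f, ‖φ f‖ = ‖f‖ ^ b) {Φ : V →ₛₗ[φ] V}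
    (hΦ : Submodule.span K (Set.range Φ) = ⊤) :
    ∃ A B : ℝ, 0 < A ∧ ∀ x, A * ‖e.equivFun x‖ ^ b ≤ ‖e.equivFun (Φ x)‖ ∧
      ‖e.equivFun (Φ x)‖ ≤ B * ‖e.equivFun x‖ ^ b := by
  obtain ⟨M, hM⟩ := exists_linearEquiv_equivFun_apply e hΦ
  obtain ⟨A, hA, hAM⟩ := M.symm.toContinuousLinearEquiv.toContinuousLinearMap.bound
  obtain ⟨B, -, hBM⟩ := M.toContinuousLinearEquiv.toContinuousLinearMap.bound
  refine ⟨A⁻¹, B, inv_pos.2 hA, fun x => ?_⟩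
  rw [hM, ← norm_comp_eq_pow hb hφ, inv_mul_le_iff₀ hA]
  exact ⟨by simpa using hAM (M (φ ∘ e.equivFun x)), hBM _⟩

end Coordinates

/-- A nonarchimedean `K`-norm on `V`, as a norm of additive groups. -/
def addGroupNormOfIsNonarchimedean {K V : Type*} [NormedField K] [AddCommGroup V]
    [Module K V] {N : V → ℝ} (hadd : IsNonarchimedean N)
    (hsmul : ∀ (c : K) x, N (c • x) = ‖c‖ * N x) (hdef : ∀ x, N x = 0 → x = 0) :
    AddGroupNorm V :=
  have hzero : N 0 = 0 := by rw [← zero_smul K (0 : V), hsmul, norm_zero, zero_mul]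
  have hneg (x : V) : N (-x) = N x := by
    rw [← neg_one_smul K, hsmul, norm_neg, norm_one, one_mul]
  have hnonneg (x : V) : 0 ≤ N x := by
    simpa only [add_neg_cancel, hzero, hneg, max_self] using hadd x (-x)
  { toFun := N
    map_zero' := hzero
    add_le' := fun x y => (hadd x y).trans (max_le_add_of_nonneg (hnonneg x) (hnonneg y))
    neg' := hneg
    eq_zero_of_map_eq_zero' := hdef }

theorem exists_addGroupNorm_apply_eq_pow_of_le {K V : Type*} [NormedField K]
    [NormedAddCommGroup V] [NormedSpace K V] [IsUltrametricDist V] {φ : K →+* K} {b : ℕ}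
    (hb : 1 < b) (hφ : ∀ f, ‖φ f‖ = ‖f‖ ^ b) {Φ : V →ₛₗ[φ] V} {A B : ℝ} (hA : 0 < A)
    (hlow : ∀ x, A * ‖x‖ ^ b ≤ ‖Φ x‖) (hup : ∀ x, ‖Φ x‖ ≤ B * ‖x‖ ^ b) :
    ∃ N : AddGroupNorm V, IsNonarchimedean N ∧ (∀ (c : K) x, N (c • x) = ‖c‖ * N x) ∧
      ∀ x, N (Φ x) = N x ^ b := by
  have hb₀ : b ≠ 0 := (zero_lt_one.trans hb).ne'
  choose L hL using fun x => exists_tendsto_rpow_inv_pow (a := fun n => ‖Φ^[n] x‖) hb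
    (fun n => norm_nonneg _) fun n => by rw [Function.iterate_succ_apply']; exact hup _
  have hle (x : V) : min 1 A * ‖x‖ ≤ L x :=
    min_one_mul_le_of_tendsto_rpow_inv_pow (a := fun n => ‖Φ^[n] x‖) hb hA (fun n => norm_nonneg _)
      (fun n => by rw [Function.iterate_succ_apply']; exact hlow _) (hL x)
  have hsmul (c : K) (x : V) : L (c • x) = ‖c‖ * L x := by
    refine tendsto_nhds_unique (hL _) (((hL x).const_mul ‖c‖).congr fun n => ?_)
    rw [iterate_map_smulₛₗ, norm_smul, norm_iterate_eq_pow hφ,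
      Real.mul_rpow (by positivity) (norm_nonneg _),
      Real.pow_rpow_inv_natCast (norm_nonneg c) (pow_ne_zero n hb₀)]
  have hadd (x y : V) : L (x + y) ≤ max (L x) (L y) := by
    refine le_of_tendsto_of_tendsto' (hL _) ((hL x).max (hL y)) fun n => ?_
    have hexp : (0 : ℝ) ≤ ((b ^ n : ℕ) : ℝ)⁻¹ := by positivity
    rw [iterate_map_add, ← (Real.monotoneOn_rpow_Ici_of_exponent_nonneg hexp).map_max
      (norm_nonneg _) (norm_nonneg _)]
    exact Real.rpow_le_rpow (norm_nonneg _) (IsUltrametricDist.norm_add_le_max _ _) hexp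
  have hpow (x : V) : L (Φ x) = L x ^ b := by
    refine tendsto_nhds_unique (hL _)
      ((((hL x).comp (Filter.tendsto_add_atTop_nat 1)).pow b).congr fun n => ?_)
    rw [Function.comp_apply, Real.rpow_pow_comm (norm_nonneg _),
      rpow_inv_pow_succ hb₀ (norm_nonneg _), Function.iterate_succ_apply]
  have hdef (x : V) (hx : L x = 0) : x = 0 := by
    have hmul : min 1 A * ‖x‖ ≤ 0 := (hle x).trans_eq hx
    exact norm_le_zero_iff.1 (nonpos_of_mul_nonpos_right hmul (lt_min zero_lt_one hA))
  exact ⟨addGroupNormOfIsNonarchimedean hadd hsmul hdef, hadd, hsmul, hpow⟩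

theorem exists_addGroupNorm_apply_eq_pow {K V : Type*} [NontriviallyNormedField K]
    [CompleteSpace K] [IsUltrametricDist K] [AddCommGroup V] [Module K V] [FiniteDimensional K V]
    {φ : K →+* K} {b : ℕ} (hb : 1 < b) (hφ : ∀ f, ‖φ f‖ = ‖f‖ ^ b) {Φ : V →ₛₗ[φ] V}
    (hΦ : Submodule.span K (Set.range Φ) = ⊤) :
    ∃ N : AddGroupNorm V, IsNonarchimedean N ∧ (∀ (c : K) x, N (c • x) = ‖c‖ * N x) ∧
      ∀ x, N (Φ x) = N x ^ b := by
  let e := Module.finBasis K V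
  obtain ⟨A, B, hA, hAB⟩ := exists_norm_equivFun_le e (zero_lt_one.trans hb).ne' hφ hΦ
  let := NormedAddCommGroup.induced V _ e.equivFun e.equivFun.injective
  let := NormedSpace.induced K V _ e.equivFun
  have : IsUltrametricDist V :=
    IsUltrametricDist.isUltrametricDist_of_forall_norm_add_le_max_norm fun x y =>
      (congrArg norm (map_add e.equivFun x y)).trans_le (IsUltrametricDist.norm_add_le_max _ _)
  exact exists_addGroupNorm_apply_eq_pow_of_le hb hφ hA (fun x => (hAB x).1) fun x => (hAB x).2

section Ultrametric

variable {K V ι : Type*} [NormedField K] [NormedAddCommGroup V] [NormedSpace K V]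
  [IsUltrametricDist V]

theorem linearIndependent_of_norm_ne_norm_smul {x : ι → V} (hx : ∀ i, x i ≠ 0)
    (hne : Pairwise fun i j => ∀ c : K, ‖x i‖ ≠ ‖c • x j‖) : LinearIndependent K x := by
  classical
  refine linearIndependent_iff'.2 fun s g hsum j hj => by_contra fun hgj => ?_
  set t := s.filter (g · ≠ 0) with ht
  have hjt : j ∈ t := Finset.mem_filter.2 ⟨hj, hgj⟩
  have hsum' : ∑ i ∈ t, g i • x i = 0 := by
    rw [ht, Finset.sum_filter_of_ne fun i _ h => left_ne_zero_of_smul h, hsum]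
  have hpair : (t : Set ι).Pairwise fun i l => ‖g i • x i‖ ≠ ‖g l • x l‖ := by
    intro i hi l _ hil heq
    have hgi : g i ≠ 0 := (Finset.mem_filter.1 hi).2
    refine hne hil ((g i)⁻¹ * g l) ?_
    rw [mul_smul, norm_smul, ← heq, ← norm_smul, inv_smul_smul₀ hgi]
  have hle : ‖g j • x j‖ ≤ ‖∑ i ∈ t, g i • x i‖ := by
    rw [IsUltrametricDist.norm_sum_eq_sup'_of_pairwise_ne ⟨j, hjt⟩ hpair]
    exact Finset.le_sup' (fun i => ‖g i • x i‖) hjt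
  rw [hsum', norm_zero, norm_le_zero_iff] at hle
  exact smul_ne_zero hgj (hx j) hle

variable (K) in
theorem exists_norm_pow_eq_norm_smul [FiniteDimensional K V] [Nontrivial V] {T : V → V} {b : ℕ}
    (hT : ∀ x, ‖T x‖ = ‖x‖ ^ b) :
    ∃ y : V, y ≠ 0 ∧ ∃ s ≠ 0, ∃ c : K, ‖y‖ ^ b ^ s = ‖c • y‖ := by
  obtain ⟨x, hx⟩ := exists_ne (0 : V)
  have hne (i : ℕ) : T^[i] x ≠ 0 := by
    rw [← norm_ne_zero_iff, norm_iterate_eq_pow hT]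
    exact pow_ne_zero _ (norm_ne_zero_iff.2 hx)
  have hshift {i j : ℕ} (hij : i < j) : ‖T^[i] x‖ ^ b ^ (j - i) = ‖T^[j] x‖ := by
    rw [← norm_iterate_eq_pow hT, ← Function.iterate_add_apply, Nat.sub_add_cancel hij.le]
  have hdep : ¬ LinearIndependent K fun i : Fin (Module.finrank K V + 1) => T^[i] x := fun h => by
    simpa using h.fintype_card_le_finrank
  obtain ⟨i, j, hij, c, hc⟩ : ∃ i j : Fin (Module.finrank K V + 1), i ≠ j ∧
      ∃ c : K, ‖T^[i] x‖ = ‖c • T^[j] x‖ := by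
    contrapose! hdep
    exact linearIndependent_of_norm_ne_norm_smul (fun i => hne i) hdep
  obtain hlt | hlt := hij.lt_or_gt
  · have hc₀ : c ≠ 0 := by
      rintro rfl
      rw [zero_smul, norm_zero, norm_eq_zero] at hc
      exact hne i hc
    refine ⟨_, hne i, j - i, (Nat.sub_pos_of_lt hlt).ne', c⁻¹, ?_⟩
    rw [hshift hlt, norm_smul, hc, ← norm_smul, inv_smul_smul₀ hc₀]
  · exact ⟨_, hne j, i - j, (Nat.sub_pos_of_lt hlt).ne', c, (hshift hlt).trans hc⟩

end Ultrametric

section CommonDenominator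

variable {b : ℕ} {q : ℚ}

theorem exists_mul_eq_intCast_iff {a : ℤ} :
    (∃ m : ℤ, (a : ℚ) * q = m) ↔ (a : ZMod q.den) = 0 := by
  rw [ZMod.intCast_zmod_eq_zero_iff_dvd]
  constructor
  · rintro ⟨m, hm⟩
    have hmul : a * q.num = m * q.den := by
      have : (a : ℚ) * q.num = m * q.den := by rw [← hm, mul_assoc, Rat.mul_den_eq_num]
      exact_mod_cast this
    exact (Rat.isCoprime_num_den q).symm.dvd_of_dvd_mul_right ⟨m, by rw [hmul, mul_comm]⟩
  · rintro ⟨c, rfl⟩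
    exact ⟨c * q.num, by push_cast; rw [mul_comm (q.den : ℚ), mul_assoc, Rat.den_mul_eq_num]⟩

theorem coprime_den_of_mul_eq_intCast {s : ℕ} {m : ℤ} (hs : s ≠ 0)
    (h : ((b : ℚ) ^ s - 1) * q = m) : q.den.Coprime b := by
  have hpow : (b : ZMod q.den) ^ s = 1 := by
    have := exists_mul_eq_intCast_iff (a := (b : ℤ) ^ s - 1).1 ⟨m, by push_cast; exact h⟩
    push_cast at this
    exact sub_eq_zero.1 this
  exact ((ZMod.isUnit_iff_coprime b q.den).1 (IsUnit.of_pow_eq_one hpow hs)).symm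

theorem orderOf_natCast_pos_of_coprime {n : ℕ} (hn : n ≠ 0) (h : n.Coprime b) :
    0 < orderOf (b : ZMod n) := by
  have : NeZero n := ⟨hn⟩
  rw [← ZMod.coe_unitOfCoprime b h.symm, orderOf_units]
  exact orderOf_pos _

theorem exists_natCast_eq_pow_orderOf_sub_one_mul (hb : b ≠ 0) (hq : 0 ≤ q) :
    ∃ n : ℕ, (n : ℚ) = ((b : ℚ) ^ orderOf (b : ZMod q.den) - 1) * q := by
  set δ := orderOf (b : ZMod q.den) with hδ
  obtain ⟨m, hm⟩ := (exists_mul_eq_intCast_iff (a := (b : ℤ) ^ δ - 1)).2 <| by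
    push_cast
    rw [hδ, pow_orderOf_eq_one, sub_self]
  push_cast at hm
  have hm₀ : 0 ≤ m := by
    have : (1 : ℚ) ≤ (b : ℚ) ^ δ := one_le_pow₀ (mod_cast Nat.one_le_iff_ne_zero.2 hb)
    have : (0 : ℚ) ≤ m := hm ▸ mul_nonneg (sub_nonneg.2 this) hq
    exact_mod_cast this
  lift m to ℕ using hm₀
  exact ⟨m, by rw [hm, Int.cast_natCast]⟩

theorem eq_of_pow_mul_sub_eq_intCast {i j : ℕ} {m : ℤ} (hi : i < orderOf (b : ZMod q.den))
    (hj : j < orderOf (b : ZMod q.den)) (h : (b : ℚ) ^ i * q - (b : ℚ) ^ j * q = m) : i = j := by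
  have hzero := (exists_mul_eq_intCast_iff (a := (b : ℤ) ^ i - (b : ℤ) ^ j) (q := q)).1
    ⟨m, by push_cast; rw [sub_mul, h]⟩
  push_cast at hzero
  exact pow_injOn_Iio_orderOf hi hj (sub_eq_zero.1 hzero)

end CommonDenominator

theorem mul_div_pow_le {ρ t r : ℝ} {B : ℕ} (ht : 0 ≤ t) (htr : t ≤ r) (hr : r < ρ) (hB : 1 < B) :
    ρ * (t / ρ) ^ B ≤ r / ρ * t := by
  have hρ : 0 < ρ := (ht.trans htr).trans_lt hr
  have hle : t / ρ ≤ r / ρ := by gcongr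
  have hle_one : t / ρ ≤ 1 := hle.trans ((div_lt_one hρ).2 hr).le
  calc ρ * (t / ρ) ^ B ≤ ρ * (t / ρ) ^ 2 := by
        gcongr ρ * ?_
        exact pow_le_pow_of_le_one (by positivity) hle_one hB
    _ = t / ρ * t := by field_simp
    _ ≤ r / ρ * t := by gcongr

/-- `k` is a coefficient field of the valued field `K`: it lies in the unit ball of `K` and
represents every residue class. -/
class IsCoefficientField (k K : Type*) [Field k] [NormedField K] [Algebra k K] : Prop where
  norm_algebraMap_le_one : ∀ c : k, ‖algebraMap k K c‖ ≤ 1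
  exists_norm_sub_algebraMap_lt_one : ∀ f : K, ‖f‖ ≤ 1 → ∃ c : k, ‖f - algebraMap k K c‖ < 1

namespace IsCoefficientField

variable (k K : Type*) {V : Type*} [Field k] [NormedField K] [Algebra k K]
  [IsCoefficientField k K] [NormedAddCommGroup V] [NormedSpace K V] [Module k V]
  [IsScalarTower k K V]

include K in
theorem norm_smul_le (c : k) (x : V) : ‖c • x‖ ≤ ‖x‖ := by
  rw [← algebraMap_smul K c x, norm_smul]
  exact mul_le_of_le_one_left (norm_nonneg x) (norm_algebraMap_le_one c)

include K in
theorem norm_smul_of_ne_zero {c : k} (hc : c ≠ 0) (x : V) : ‖c • x‖ = ‖x‖ := by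
  refine (norm_smul_le k K c x).antisymm ?_
  simpa only [inv_smul_smul₀ hc] using norm_smul_le k K c⁻¹ (c • x)

variable (V) [IsUltrametricDist V] {ρ : ℝ}

/-- The closed ball of radius `ρ`, a vector space over the coefficient field. -/
def closedBall (hρ : 0 < ρ) : Submodule k V where
  carrier := {x | ‖x‖ ≤ ρ}
  add_mem' hx hy := (IsUltrametricDist.norm_add_le_max _ _).trans (max_le hx hy)
  zero_mem' := norm_zero.trans_le hρ.le
  smul_mem' c x hx := (norm_smul_le k K c x).trans hx

/-- The open ball of radius `ρ`, a vector space over the coefficient field. -/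
def openBall (hρ : 0 < ρ) : Submodule k V where
  carrier := {x | ‖x‖ < ρ}
  add_mem' hx hy := (IsUltrametricDist.norm_add_le_max _ _).trans_lt (max_lt hx hy)
  zero_mem' := norm_zero.trans_lt hρ
  smul_mem' c x hx := (norm_smul_le k K c x).trans_lt hx

/-- The graded piece `{‖x‖ ≤ ρ} / {‖x‖ < ρ}` of the norm filtration of `V`. -/
abbrev gradedPiece (hρ : 0 < ρ) : Type _ :=
  closedBall k K V hρ ⧸ (openBall k K V hρ).submoduleOf (closedBall k K V hρ)

variable {k K V}

theorem mk_eq_zero_iff {hρ : 0 < ρ} {x : closedBall k K V hρ} :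
    (Submodule.Quotient.mk x : gradedPiece k K V hρ) = 0 ↔ ‖(x : V)‖ < ρ :=
  Submodule.Quotient.mk_eq_zero _

theorem linearIndependent_of_mk {ι : Type*} [Finite ι] {hρ : 0 < ρ} {y : ι → closedBall k K V hρ}
    (hy : LinearIndependent k fun i => (Submodule.Quotient.mk (y i) : gradedPiece k K V hρ)) :
    LinearIndependent K fun i => (y i : V) := by
  have := Fintype.ofFinite ι
  refine Fintype.linearIndependent_iff.2 fun f hf => by_contra fun hne => ?_
  push Not at hne
  obtain ⟨i₀, hi₀⟩ := hne
  have : Nonempty ι := ⟨i₀⟩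
  obtain ⟨j, hj⟩ := Finite.exists_max (‖f ·‖)
  have hfj : f j ≠ 0 := norm_pos_iff.1 ((norm_pos_iff.2 hi₀).trans_le (hj i₀))
  have hle (i : ι) : ‖(f j)⁻¹ * f i‖ ≤ 1 := by
    rw [norm_mul, norm_inv, inv_mul_le_one₀ (norm_pos_iff.2 hfj)]
    exact hj i
  choose c hc using fun i => exists_norm_sub_algebraMap_lt_one (k := k) _ (hle i)
  have hsum : ∑ i, c i • (y i : V) = -∑ i, ((f j)⁻¹ * f i - algebraMap k K (c i)) • (y i : V) := by
    simp only [sub_smul, mul_smul, Finset.sum_sub_distrib, ← Finset.smul_sum, hf, smul_zero,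
      zero_sub, neg_neg, algebraMap_smul]
  have hlt : ‖∑ i, c i • (y i : V)‖ < ρ := by
    rw [hsum, norm_neg]
    obtain ⟨i, -, hi⟩ := IsUltrametricDist.exists_norm_finsetSum_le Finset.univ
      fun i => ((f j)⁻¹ * f i - algebraMap k K (c i)) • (y i : V)
    refine hi.trans_lt ?_
    rw [norm_smul]
    exact (mul_le_mul_of_nonneg_left (y i).2 (norm_nonneg _)).trans_lt
      (mul_lt_of_lt_one_left hρ (hc i))
  have hcj : c j = 0 := by
    refine Fintype.linearIndependent_iff.1 hy c ?_ j
    have hmk : (Submodule.Quotient.mk (∑ i, c i • y i) : gradedPiece k K V hρ) = 0 :=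
      mk_eq_zero_iff.2 (by simpa only [Submodule.coe_sum, Submodule.coe_smul] using hlt)
    simpa only [← Submodule.mkQ_apply, map_sum, map_smul] using hmk
  have hlt_one := hc j
  rw [hcj, map_zero, sub_zero, inv_mul_cancel₀ hfj, norm_one] at hlt_one
  exact lt_irrefl _ hlt_one

include K in
theorem exists_smul_sub_eq [CompleteSpace V] {B : ℕ} (hB : 1 < B) (ψ : Module.End k V)
    (hψ : ∀ x, ‖ψ x‖ = ρ * (‖x‖ / ρ) ^ B) {a : k} (ha : a ≠ 0) {y : V} (hy : ‖y‖ < ρ) :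
    ∃ s, ‖s‖ < ρ ∧ a • s - ψ s = y := by
  have hρ : 0 < ρ := (norm_nonneg y).trans_lt hy
  have hr : ‖y‖ / ρ < 1 := (div_lt_one hρ).2 hy
  have hcontr {x : V} (hx : ‖x‖ ≤ ‖y‖) : ‖ψ x‖ ≤ ‖y‖ / ρ * ‖x‖ := by
    rw [hψ]
    exact mul_div_pow_le (norm_nonneg x) hx hy hB
  let T : V → V := fun x => a⁻¹ • (ψ x + y)
  have hmaps : Set.MapsTo T (Metric.closedBall 0 ‖y‖) (Metric.closedBall 0 ‖y‖) := by
    intro x hx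
    rw [mem_closedBall_zero_iff] at hx ⊢
    rw [norm_smul_of_ne_zero k K (inv_ne_zero ha)]
    refine (IsUltrametricDist.norm_add_le_max _ _).trans (max_le ?_ le_rfl)
    exact (hcontr hx).trans <| (mul_le_of_le_one_left (norm_nonneg x) hr.le).trans hx
  have hT : ContractingWith ⟨‖y‖ / ρ, by positivity⟩ (hmaps.restrict T _ _) := by
    refine ⟨hr, LipschitzWith.of_dist_le_mul fun x₁ x₂ => ?_⟩
    have hsub : T x₁ - T x₂ = a⁻¹ • ψ (x₁ - x₂) := by
      simp only [T, ← smul_sub, map_sub, add_sub_add_right_eq_sub]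
    have hmem : ‖(x₁ - x₂ : V)‖ ≤ ‖y‖ := by
      rw [← dist_eq_norm]
      exact (dist_triangle_max _ 0 _).trans (max_le x₁.2 (Metric.mem_closedBall'.1 x₂.2))
    rw [Subtype.dist_eq, Subtype.dist_eq, dist_eq_norm, dist_eq_norm]
    change ‖T x₁ - T x₂‖ ≤ _
    rw [hsub, norm_smul_of_ne_zero k K (inv_ne_zero ha)]
    exact hcontr hmem
  obtain ⟨s, hs, hfix, -⟩ := hT.exists_fixedPoint' Metric.isClosed_closedBall.isComplete hmaps
    (Metric.mem_closedBall_self (norm_nonneg y)) (edist_ne_top _ _)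
  refine ⟨s, (mem_closedBall_zero_iff.1 hs).trans_lt hy, ?_⟩
  have hs' : a • s = ψ s + y := (inv_smul_eq_iff₀ ha).1 hfix |>.symm
  rw [hs', add_sub_cancel_left]

variable [FiniteDimensional K V]

theorem finiteDimensional_gradedPiece (hρ : 0 < ρ) :
    FiniteDimensional k (gradedPiece k K V hρ) := by
  refine Module.rank_lt_aleph0_iff.1 <|
    (rank_le (n := Module.finrank K V) fun s hs => ?_).trans_lt Cardinal.natCast_lt_aleph0
  choose y hy using fun i : s => Submodule.Quotient.mk_surjective _ (i : gradedPiece k K V hρ)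
  have hli : LinearIndependent k fun i => (Submodule.Quotient.mk (y i) : gradedPiece k K V hρ) := by
    simpa only [hy] using hs
  simpa only [Fintype.card_coe] using (linearIndependent_of_mk hli).fintype_card_le_finrank

include K in
theorem exists_norm_sub_smul_lt [IsAlgClosed k] (hρ : 0 < ρ) (ψ : Module.End k V)
    (hle : ∀ x, ‖x‖ ≤ ρ → ‖ψ x‖ ≤ ρ) (hlt : ∀ x, ‖x‖ < ρ → ‖ψ x‖ < ρ) {z : V} (hz : ‖z‖ = ρ) :
    ∃ (a : k) (y : V), ‖y‖ = ρ ∧ ‖ψ y - a • y‖ < ρ := by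
  have := finiteDimensional_gradedPiece (k := k) (K := K) (V := V) hρ
  have hz₀ : (Submodule.Quotient.mk ⟨z, hz.le⟩ : gradedPiece k K V hρ) ≠ 0 :=
    mk_eq_zero_iff.not.2 hz.not_lt
  have : Nontrivial (gradedPiece k K V hρ) := ⟨_, 0, hz₀⟩
  let gr : Module.End k (gradedPiece k K V hρ) :=
    Submodule.mapQ _ _ (ψ.restrict (p := closedBall k K V hρ) hle) fun x hx => hlt x hx
  obtain ⟨a, ha⟩ := Module.End.exists_eigenvalue gr
  obtain ⟨w, hw⟩ := ha.exists_hasEigenvector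
  obtain ⟨y, rfl⟩ := Submodule.Quotient.mk_surjective _ w
  refine ⟨a, y, (y.2 : ‖(y : V)‖ ≤ ρ).eq_of_not_lt (mk_eq_zero_iff.not.1 hw.2), ?_⟩
  have hmk : (Submodule.Quotient.mk (ψ.restrict hle y - a • y) : gradedPiece k K V hρ) = 0 :=
    sub_eq_zero.2 hw.apply_eq_smul
  exact mk_eq_zero_iff.1 hmk

include K in
theorem exists_apply_eq_smul [IsAlgClosed k] [CompleteSpace V] {B : ℕ} (hB : 1 < B)
    (hρ : 0 < ρ) (ψ : Module.End k V) (hψ : ∀ x, ‖ψ x‖ = ρ * (‖x‖ / ρ) ^ B) {z : V} (hz : ‖z‖ = ρ) :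
    ∃ (a : k) (v : V), a ≠ 0 ∧ ‖v‖ = ρ ∧ ψ v = a • v := by
  have hψρ {x : V} (hx : ‖x‖ = ρ) : ‖ψ x‖ = ρ := by
    rw [hψ, hx, div_self hρ.ne', one_pow, mul_one]
  have hle (x : V) (hx : ‖x‖ ≤ ρ) : ‖ψ x‖ ≤ ρ := by
    rw [hψ]
    exact mul_le_of_le_one_right hρ.le (pow_le_one₀ (by positivity) ((div_le_one hρ).2 hx))
  have hlt (x : V) (hx : ‖x‖ < ρ) : ‖ψ x‖ < ρ := by
    rw [hψ]
    exact mul_lt_of_lt_one_right hρ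
      (pow_lt_one₀ (by positivity) ((div_lt_one hρ).2 hx) (zero_lt_one.trans hB).ne')
  obtain ⟨a, y, hy, hay⟩ := exists_norm_sub_smul_lt (K := K) hρ ψ hle hlt hz
  have ha : a ≠ 0 := by
    rintro rfl
    rw [zero_smul, sub_zero, hψρ hy] at hay
    exact lt_irrefl _ hay
  obtain ⟨s, hs, hsy⟩ := exists_smul_sub_eq (K := K) hB ψ hψ ha hay
  refine ⟨a, y + s, ha, ?_, ?_⟩
  · rw [IsUltrametricDist.norm_add_eq_max_of_norm_ne_norm (hy.trans_ne hs.ne'), hy,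
      max_eq_left hs.le]
  · rw [map_add, smul_add, ← sub_eq_sub_iff_add_eq_add.1 hsy, add_comm]

end IsCoefficientField

section Laurent

open WithZero HahnSeries

/-- The `u`-adic valuation on `k((u))` as a valuation of rank one, normalized by `|u| = 1/2`. -/
@[reducible]
noncomputable def laurentRankOne (k : Type*) [Field k] :
    (Valued.v : Valuation (LaurentSeries k) ℤᵐ⁰).RankOne where
  hom' := (WithZeroMulInt.toNNReal (e := 2) two_ne_zero).comp
    MonoidWithZeroHom.ValueGroup₀.embedding
  strictMono' := (WithZeroMulInt.toNNReal_strictMono one_lt_two).comp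
    MonoidWithZeroHom.ValueGroup₀.embedding_strictMono
  exists_val_nontrivial := ⟨single 1 1, by
    rw [LaurentSeries.valuation_single_zpow]
    decide +revert⟩

attribute [local instance] laurentRankOne

/-- The `u`-adic absolute value on `k((u))`, normalized by `|u| = 1/2`. -/
@[reducible]
noncomputable def laurentNormedField (k : Type*) [Field k] :
    NontriviallyNormedField (LaurentSeries k) :=
  Valued.toNontriviallyNormedField (LaurentSeries k) ℤᵐ⁰

attribute [local instance] laurentNormedField

variable {k : Type*} [Field k] {f : LaurentSeries k}

theorem log_valuation_eq_neg_order (hf : f ≠ 0) : log (Valued.v f) = -f.order := by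
  have hle (D : ℤ) : log (Valued.v f) ≤ -D ↔ D ≤ f.order := by
    rw [log_le_iff_le_exp ((Valuation.ne_zero_iff _).2 hf),
      LaurentSeries.valuation_le_iff_coeff_lt_eq_zero, le_order_iff_forall hf]
  refine le_antisymm ((hle _).2 le_rfl) (neg_le.1 ?_)
  rw [← hle, neg_neg]

theorem laurent_norm_eq (hf : f ≠ 0) : ‖f‖ = 2 ^ (-f.order) := by
  have hv : Valued.v f ≠ 0 := (Valuation.ne_zero_iff _).2 hf
  have hnorm : ‖f‖ = WithZeroMulInt.toNNReal (e := 2) two_ne_zero (Valued.v f) :=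
    Valued.toNormedField.norm_def.trans <|
      congrArg (fun g => (WithZeroMulInt.toNNReal (e := 2) two_ne_zero g : ℝ))
        (Valuation.embedding_restrict _ f)
  rw [hnorm, WithZeroMulInt.toNNReal_neg_apply _ hv, NNReal.coe_zpow, NNReal.coe_ofNat,
    ← log_valuation_eq_neg_order hf]
  conv_rhs => rw [← coe_unzero hv]
  rfl

theorem laurent_norm_le_one_iff : ‖f‖ ≤ 1 ↔ ∀ n < 0, f.coeff n = 0 := by
  obtain rfl | hf := eq_or_ne f 0
  · simp
  · rw [laurent_norm_eq hf, zpow_le_one_iff_right₀ one_lt_two, neg_nonpos, le_order_iff_forall hf]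

theorem laurent_norm_lt_one_iff : ‖f‖ < 1 ↔ ∀ n ≤ 0, f.coeff n = 0 := by
  obtain rfl | hf := eq_or_ne f 0
  · simp
  · rw [laurent_norm_eq hf, zpow_lt_one_iff_right₀ one_lt_two, neg_lt_zero, Int.lt_iff_add_one_le,
      le_order_iff_forall hf]
    simp only [Int.lt_add_one_iff]

/-- The `k`-algebra `k((u))` with the coefficientwise scalar action. The default instance goes
through `k⟦X⟧`, and its action is not definitionally this one. -/
@[reducible]
noncomputable def laurentAlgebra (k : Type*) [Field k] : Algebra k (LaurentSeries k) :=
  HahnSeries.instAlgebra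

attribute [local instance] laurentAlgebra

instance : IsCoefficientField k (LaurentSeries k) where
  norm_algebraMap_le_one c := laurent_norm_le_one_iff.2 fun n hn => by
    rw [← C_eq_algebraMap, C_apply, coeff_single_of_ne hn.ne]
  exists_norm_sub_algebraMap_lt_one f hf :=
    ⟨f.coeff 0, laurent_norm_lt_one_iff.2 fun n hn => by
      rw [← C_eq_algebraMap, C_apply, coeff_sub]
      obtain hn | rfl := hn.lt_or_eq
      · rw [coeff_single_of_ne hn.ne, laurent_norm_le_one_iff.1 hf n hn, sub_zero]
      · rw [coeff_single_same, sub_self]⟩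

section Substitution

variable {b : ℕ} {φ : LaurentSeries k →+* LaurentSeries k}

theorem order_map_eq_mul (hb : b ≠ 0) (hφ1 : ∀ f m, (φ f).coeff ((b : ℤ) * m) = f.coeff m)
    (hφ2 : ∀ f m, ¬ (b : ℤ) ∣ m → (φ f).coeff m = 0) (hf : f ≠ 0) :
    (φ f).order = b * f.order := by
  have hφf : (φ f).coeff (φ f).order ≠ 0 := coeff_order_eq_zero.not.2 ((map_ne_zero φ).2 hf)
  refine le_antisymm (order_le_of_coeff_ne_zero ?_) ?_
  · rw [hφ1]
    exact coeff_order_eq_zero.not.2 hf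
  · obtain ⟨m, hm⟩ : (b : ℤ) ∣ (φ f).order := by_contra fun h => hφf (hφ2 f _ h)
    rw [hm, hφ1] at hφf
    rw [hm]
    gcongr
    exact order_le_of_coeff_ne_zero hφf

theorem norm_map_eq_pow (hb : b ≠ 0) (hφ1 : ∀ f m, (φ f).coeff ((b : ℤ) * m) = f.coeff m)
    (hφ2 : ∀ f m, ¬ (b : ℤ) ∣ m → (φ f).coeff m = 0) (f : LaurentSeries k) :
    ‖φ f‖ = ‖f‖ ^ b := by
  obtain rfl | hf := eq_or_ne f 0
  · rw [map_zero, norm_zero, zero_pow hb]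
  · rw [laurent_norm_eq ((map_ne_zero φ).2 hf), laurent_norm_eq hf,
      order_map_eq_mul hb hφ1 hφ2 hf, ← zpow_natCast, ← zpow_mul, neg_mul, mul_comm]

theorem map_algebraMap_eq (hb : b ≠ 0) (hφ1 : ∀ f m, (φ f).coeff ((b : ℤ) * m) = f.coeff m)
    (hφ2 : ∀ f m, ¬ (b : ℤ) ∣ m → (φ f).coeff m = 0) (c : k) :
    φ (algebraMap k _ c) = algebraMap k _ c := by
  ext j
  rw [← C_eq_algebraMap, C_apply]
  by_cases hj : (b : ℤ) ∣ j
  · obtain ⟨m, rfl⟩ := hj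
    simp [hφ1, coeff_single, hb]
  · have hj₀ : j ≠ 0 := fun h => hj (h ▸ dvd_zero _)
    rw [hφ2 _ _ hj, coeff_single_of_ne hj₀]

end Substitution

section TwistedIterate

variable {φ : LaurentSeries k →+* LaurentSeries k} {V : Type*} [AddCommGroup V]
  [Module (LaurentSeries k) V] [Module k V] [IsScalarTower k (LaurentSeries k) V]

theorem map_smul_of_map_algebraMap_eq (hφ : ∀ c : k, φ (algebraMap k _ c) = algebraMap k _ c)
    (Φ : V →ₛₗ[φ] V) (c : k) (x : V) : Φ (c • x) = c • Φ x := by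
  rw [← algebraMap_smul (LaurentSeries k) c x, map_smulₛₗ, hφ, algebraMap_smul]

/-- The operator `u⁻ⁿ Φ^δ`, which is `k`-linear because `φ` fixes `k`; its eigenvectors for the
eigenvalue `a` are the solutions `v ≠ 0` of `Φ^δ v = a uⁿ v`. -/
noncomputable def twistedIterate (hφ : ∀ c : k, φ (algebraMap k _ c) = algebraMap k _ c)
    (Φ : V →ₛₗ[φ] V) (δ n : ℕ) : Module.End k V where
  toFun x := (single (-n : ℤ) 1 : LaurentSeries k) • Φ^[δ] x
  map_add' x y := by rw [iterate_map_add, smul_add]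
  map_smul' c x := by
    have hcomm : Function.Commute Φ (c • ·) := map_smul_of_map_algebraMap_eq hφ Φ c
    rw [(hcomm.iterate_left δ).eq, smul_comm, RingHom.id_apply]

theorem iterate_eq_single_smul_of_twistedIterate_eq {Φ : V →ₛₗ[φ] V}
    (hφ : ∀ c : k, φ (algebraMap k _ c) = algebraMap k _ c) {δ n : ℕ} {a : k} {v : V}
    (hv : twistedIterate hφ Φ δ n v = a • v) :
    Φ^[δ] v = (single (n : ℤ) a : LaurentSeries k) • v := by
  calc Φ^[δ] v = (single (n : ℤ) 1 : LaurentSeries k) • twistedIterate hφ Φ δ n v := by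
        change Φ^[δ] v = (single (n : ℤ) 1 : LaurentSeries k) •
          (single (-n : ℤ) 1 : LaurentSeries k) • Φ^[δ] v
        rw [smul_smul, single_mul_single, add_neg_cancel, mul_one, single_zero_one, one_smul]
    _ = (single (n : ℤ) a : LaurentSeries k) • v := by
        rw [hv, ← algebraMap_smul (LaurentSeries k) a v, smul_smul, ← C_eq_algebraMap, C_apply,
          single_mul_single, add_zero, one_mul]

end TwistedIterate

section NormedSpace

variable {V : Type*} [NormedAddCommGroup V] [NormedSpace (LaurentSeries k) V]

theorem exists_intCast_eq_sub_of_norm_eq_norm_smul {x y : V} {α β : ℝ} (hx : ‖x‖ = 2 ^ (-α))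
    (hy : ‖y‖ = 2 ^ (-β)) {c : LaurentSeries k} (h : ‖x‖ = ‖c • y‖) : ∃ m : ℤ, α - β = m := by
  have hc : c ≠ 0 := by
    rintro rfl
    rw [zero_smul, norm_zero, hx] at h
    exact (Real.rpow_pos_of_pos two_pos _).ne' h
  rw [hx, norm_smul, hy, laurent_norm_eq hc, ← Real.rpow_intCast, ← Real.rpow_add two_pos,
    Real.rpow_right_inj two_pos one_lt_two.ne'] at h
  exact ⟨c.order, by push_cast at h; linarith⟩

theorem norm_single_smul {n : ℤ} {a : k} (ha : a ≠ 0) (x : V) :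
    ‖(single n a : LaurentSeries k) • x‖ = 2 ^ (-n) * ‖x‖ := by
  rw [norm_smul, laurent_norm_eq (single_ne_zero ha), order_single ha]

variable {b : ℕ}

theorem norm_single_neg_floor_smul {x : V} {q : ℚ} (hx : ‖x‖ = 2 ^ (-(q : ℝ))) :
    ‖(single (-⌊q⌋) 1 : LaurentSeries k) • x‖ = 2 ^ (-((Int.fract q : ℚ) : ℝ)) := by
  rw [norm_single_smul one_ne_zero, hx, neg_neg, ← Real.rpow_intCast, ← Real.rpow_add two_pos,
    Int.fract, Rat.cast_sub, Rat.cast_intCast, neg_sub, sub_eq_add_neg]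

theorem norm_twistedIterate [Module k V] [IsScalarTower k (LaurentSeries k) V]
    {φ : LaurentSeries k →+* LaurentSeries k} {Φ : V →ₛₗ[φ] V}
    (hφ : ∀ c : k, φ (algebraMap k _ c) = algebraMap k _ c)
    (hΦ : ∀ x, ‖Φ x‖ = ‖x‖ ^ b) {δ n : ℕ} {q : ℝ} (hn : n = ((b : ℝ) ^ δ - 1) * q) (x : V) :
    ‖twistedIterate hφ Φ δ n x‖ = 2 ^ (-q) * (‖x‖ / 2 ^ (-q)) ^ b ^ δ := by
  change ‖(single (-n : ℤ) 1 : LaurentSeries k) • Φ^[δ] x‖ = _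
  rw [norm_single_smul one_ne_zero, norm_iterate_eq_pow hΦ, neg_neg, zpow_natCast, div_pow,
    mul_div_left_comm, mul_comm, ← Real.rpow_natCast 2 n, hn, ← Real.rpow_mul_natCast two_pos.le,
    ← Real.rpow_sub two_pos]
  congr 2
  push_cast
  ring

variable [IsUltrametricDist V]

variable (k) in
theorem exists_norm_eq_two_rpow [FiniteDimensional (LaurentSeries k) V] [Nontrivial V] (hb : 1 < b)
    {T : V → V} (hT : ∀ x, ‖T x‖ = ‖x‖ ^ b) :
    ∃ (y : V) (q : ℚ), q.den.Coprime b ∧ ‖y‖ = 2 ^ (-(q : ℝ)) := by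
  obtain ⟨y, hy, s, hs, c, hc⟩ := exists_norm_pow_eq_norm_smul (LaurentSeries k) hT
  set α : ℝ := -Real.logb 2 ‖y‖
  have hα : ‖y‖ = 2 ^ (-α) := by
    rw [neg_neg, Real.rpow_logb two_pos one_lt_two.ne' (norm_pos_iff.2 hy)]
  obtain ⟨m, hm⟩ := exists_intCast_eq_sub_of_norm_eq_norm_smul
    (norm_iterate_eq_two_rpow hT hα s) hα ((norm_iterate_eq_pow hT s y).trans hc)
  have hB : (b : ℚ) ^ s - 1 ≠ 0 := (sub_pos.2 (one_lt_pow₀ (by exact_mod_cast hb) hs)).ne'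
  have hαm : α = ((m / ((b : ℚ) ^ s - 1) : ℚ) : ℝ) := by
    have hB' : (b : ℝ) ^ s - 1 ≠ 0 := by exact_mod_cast hB
    push_cast
    rw [eq_div_iff hB', ← hm]
    ring
  exact ⟨y, m / ((b : ℚ) ^ s - 1), coprime_den_of_mul_eq_intCast hs (mul_div_cancel₀ _ hB),
    hαm ▸ hα⟩

theorem linearIndependent_iterate_of_norm_eq {T : V → V} (hT : ∀ x, ‖T x‖ = ‖x‖ ^ b) {q : ℚ}
    {v : V} (hv : ‖v‖ = 2 ^ (-(q : ℝ))) :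
    LinearIndependent (LaurentSeries k) fun i : Fin (orderOf (b : ZMod q.den)) => T^[i] v := by
  have hpow := norm_iterate_eq_two_rpow hT hv
  refine linearIndependent_of_norm_ne_norm_smul (fun i => ?_) fun i j hij c hc => hij ?_
  · rw [← norm_pos_iff, hpow]
    exact Real.rpow_pos_of_pos two_pos _
  · obtain ⟨m, hm⟩ := exists_intCast_eq_sub_of_norm_eq_norm_smul (hpow i) (hpow j) hc
    exact Fin.ext (eq_of_pow_mul_sub_eq_intCast i.isLt j.isLt (by exact_mod_cast hm))

theorem exists_iterate_eq_single_smul [IsAlgClosed k] [FiniteDimensional (LaurentSeries k) V]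
    [Module k V] [IsScalarTower k (LaurentSeries k) V] (hb : 1 < b)
    {φ : LaurentSeries k →+* LaurentSeries k} {Φ : V →ₛₗ[φ] V}
    (hφ : ∀ c : k, φ (algebraMap k _ c) = algebraMap k _ c)
    (hΦ : ∀ x, ‖Φ x‖ = ‖x‖ ^ b) {δ n : ℕ} (hδ : δ ≠ 0) {q : ℝ} (hn : n = ((b : ℝ) ^ δ - 1) * q)
    {z : V} (hz : ‖z‖ = 2 ^ (-q)) :
    ∃ (a : k) (v : V), a ≠ 0 ∧ ‖v‖ = 2 ^ (-q) ∧
      Φ^[δ] v = (single (n : ℤ) a : LaurentSeries k) • v := by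
  have := FiniteDimensional.complete (LaurentSeries k) V
  obtain ⟨a, v, ha, hv, hav⟩ := IsCoefficientField.exists_apply_eq_smul (K := LaurentSeries k)
    (one_lt_pow₀ hb hδ) (Real.rpow_pos_of_pos two_pos _) (twistedIterate hφ Φ δ n)
    (norm_twistedIterate hφ hΦ hn) hz
  exact ⟨a, v, ha, hv, iterate_eq_single_smul_of_twistedIterate_eq hφ hav⟩

end NormedSpace

theorem exists_linearIndependent_iterate [IsAlgClosed k] {b : ℕ} (hb : 1 < b)
    {φ : LaurentSeries k →+* LaurentSeries k}
    (hφ1 : ∀ f m, (φ f).coeff ((b : ℤ) * m) = f.coeff m)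
    (hφ2 : ∀ f m, ¬ (b : ℤ) ∣ m → (φ f).coeff m = 0)
    {V : Type*} [AddCommGroup V] [Module (LaurentSeries k) V]
    [FiniteDimensional (LaurentSeries k) V] [Nontrivial V] {Φ : V →ₛₗ[φ] V}
    (hΦ : Submodule.span (LaurentSeries k) (Set.range Φ) = ⊤) :
    ∃ (r : ℚ) (n : ℕ) (a : k) (v : V), r.den.Coprime b ∧ a ≠ 0 ∧
      (n : ℚ) = ((b : ℚ) ^ orderOf (b : ZMod r.den) - 1) * r ∧
      LinearIndependent (LaurentSeries k)
        (fun i : Fin (orderOf (b : ZMod r.den)) => Φ^[i] v) ∧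
      Φ^[orderOf (b : ZMod r.den)] v = (HahnSeries.single (n : ℤ) a : LaurentSeries k) • v := by
  have hb₀ : b ≠ 0 := (zero_lt_one.trans hb).ne'
  obtain ⟨N, hultra, hsmul, hpow⟩ :=
    exists_addGroupNorm_apply_eq_pow hb (norm_map_eq_pow hb₀ hφ1 hφ2) hΦ
  let := N.toNormedAddCommGroup
  let : NormedSpace (LaurentSeries k) V := ⟨fun c x => (hsmul c x).le⟩
  have : IsUltrametricDist V :=
    IsUltrametricDist.isUltrametricDist_of_isNonarchimedean_norm hultra
  let := Module.compHom V (algebraMap k (LaurentSeries k))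
  have : IsScalarTower k (LaurentSeries k) V := .of_algebraMap_smul fun _ _ => rfl
  obtain ⟨y, q, hq, hy⟩ := exists_norm_eq_two_rpow k hb hpow
  set r := Int.fract q
  have hcop : r.den.Coprime b := (Rat.den_intFract q).symm ▸ hq
  obtain ⟨n, hn⟩ := exists_natCast_eq_pow_orderOf_sub_one_mul hb₀ (Int.fract_nonneg q)
  obtain ⟨a, v, ha, hv, hav⟩ := exists_iterate_eq_single_smul hb
    (map_algebraMap_eq hb₀ hφ1 hφ2) hpow (orderOf_natCast_pos_of_coprime r.den_nz hcop).ne'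
    (by exact_mod_cast hn) (norm_single_neg_floor_smul (k := k) hy)
  exact ⟨r, n, a, v, hcop, ha, hn, linearIndependent_iterate_of_norm_eq hpow hv, hav⟩

end Laurent

theorem equivFun_map_eq_Dphi {k : Type*} [Field k] {φ : LaurentSeries k →+* LaurentSeries k}
    {V : Type*} [AddCommGroup V] [Module (LaurentSeries k) V] {Φ : V →ₛₗ[φ] V} {d n : ℕ} {a : k}
    {v : V} {B : Module.Basis (Fin d) (LaurentSeries k) V} (hB : ∀ i, B i = Φ^[i] v)
    (hv : Φ^[d] v = (HahnSeries.single (n : ℤ) a : LaurentSeries k) • v) (x : V) :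
    B.equivFun (Φ x) = Dphi φ d n a (B.equivFun x) := by
  rw [← LinearEquiv.eq_symm_apply, B.equivFun_symm_apply]
  conv_lhs => rw [← B.sum_equivFun x]
  simp only [map_sum, map_smulₛₗ, hB, ← Function.iterate_succ_apply' Φ]
  obtain - | d := d
  · rfl
  rw [Fin.sum_univ_castSucc, Fin.sum_univ_succ, add_comm]
  congr 1
  simp only [Fin.val_last, Nat.succ_eq_add_one, hv, Dphi]
  simp [smul_smul, mul_comm, Fin.last]

theorem stmt18_general {k : Type*} [Field k] [IsAlgClosed k] (b : ℕ) (hb : 1 < b)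
    (φ : LaurentSeries k →+* LaurentSeries k)
    (hφ1 : ∀ f m, (φ f).coeff ((b : ℤ) * m) = f.coeff m)
    (hφ2 : ∀ f m, ¬ ((b : ℤ) ∣ m) → (φ f).coeff m = 0)
    (V : Type*) [AddCommGroup V] [Module (LaurentSeries k) V]
    [FiniteDimensional (LaurentSeries k) V] [Nontrivial V] (φV : V → V)
    (hadd : ∀ x y, φV (x + y) = φV x + φV y)
    (hsemi : ∀ (c : LaurentSeries k) (x : V), φV (c • x) = φ c • φV x)
    (hetale : Submodule.span (LaurentSeries k) (Set.range φV) = ⊤)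
    (hsimple : ∀ W : Submodule (LaurentSeries k) V, (∀ x ∈ W, φV x ∈ W) → W = ⊥ ∨ W = ⊤) :
    ∃ (r : ℚ) (n : ℕ) (a : k), r.den.Coprime b ∧ a ≠ 0 ∧
      (∃ m : ℤ, (n : ℚ) / ((b : ℚ) ^ (orderOf (b : ZMod r.den)) - 1) - r = (m : ℚ)) ∧
      ∃ e : V ≃ₗ[LaurentSeries k] (Fin (orderOf (b : ZMod r.den)) → LaurentSeries k),
        ∀ x, e (φV x) = Dphi φ (orderOf (b : ZMod r.den)) n a (e x) := by
  let Φ : V →ₛₗ[φ] V := { toFun := φV, map_add' := hadd, map_smul' := hsemi }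
  obtain ⟨r, n, a, v, hcop, ha, hn, hli, hv⟩ :=
    exists_linearIndependent_iterate hb hφ1 hφ2 (Φ := Φ) hetale
  have hδ : 0 < orderOf (b : ZMod r.den) := orderOf_natCast_pos_of_coprime r.den_nz hcop
  set W := Submodule.span (LaurentSeries k)
    (Set.range fun i : Fin (orderOf (b : ZMod r.den)) => Φ^[i] v)
  have hvW : v ∈ W := Submodule.subset_span ⟨⟨0, hδ⟩, rfl⟩
  have hstable : ∀ x ∈ W, Φ x ∈ W := fun _ hx =>
    map_mem_span_range_iterate (hv ▸ W.smul_mem _ hvW) hx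
  have hv₀ : v ≠ 0 := (hli.ne_zero ⟨0, hδ⟩ :)
  have hspan : W = ⊤ := (hsimple W hstable).resolve_left ((Submodule.ne_bot_iff W).2 ⟨v, hvW, hv₀⟩)
  have hpow : (b : ℚ) ^ orderOf (b : ZMod r.den) - 1 ≠ 0 :=
    (sub_pos.2 (one_lt_pow₀ (by exact_mod_cast hb) hδ.ne')).ne'
  exact ⟨r, n, a, hcop, ha, ⟨0, by rw [hn, mul_div_cancel_left₀ _ hpow, sub_self, Int.cast_zero]⟩,
    (Module.Basis.mk hli hspan.ge).equivFun,
    equivFun_map_eq_Dphi (Φ := Φ) (fun i => Module.Basis.mk_apply ..) hv⟩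

/-- Classification theorem, case `σ = id`: every simple étale φ-module over
`K = k((u))`, `k = F̄_p`, with `φ(Σ aₘ uᵐ) = Σ aₘ u^{bm}`, is isomorphic to
`D(r, a) = D(ℓ(r), n, a)` for some `r ∈ R_b` and `a ∈ k*`. -/
theorem stmt18 (p : ℕ) [Fact p.Prime] (b : ℕ) (hb : 1 < b)
    (φ : LaurentSeries (AlgebraicClosure (ZMod p)) →+*
      LaurentSeries (AlgebraicClosure (ZMod p)))
    (hφ1 : ∀ (f : LaurentSeries (AlgebraicClosure (ZMod p))) (m : ℤ),
      (φ f).coeff ((b : ℤ) * m) = f.coeff m)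
    (hφ2 : ∀ (f : LaurentSeries (AlgebraicClosure (ZMod p))) (m : ℤ),
      ¬ ((b : ℤ) ∣ m) → (φ f).coeff m = 0)
    (V : Type*) [AddCommGroup V]
    [Module (LaurentSeries (AlgebraicClosure (ZMod p))) V]
    [FiniteDimensional (LaurentSeries (AlgebraicClosure (ZMod p))) V]
    [Nontrivial V]
    (φV : V → V)
    (hadd : ∀ x y, φV (x + y) = φV x + φV y)
    (hsemi : ∀ (c : LaurentSeries (AlgebraicClosure (ZMod p))) (x : V),
      φV (c • x) = φ c • φV x)
    (hetale : Submodule.span (LaurentSeries (AlgebraicClosure (ZMod p)))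
      (Set.range φV) = ⊤)
    (hsimple : ∀ W : Submodule (LaurentSeries (AlgebraicClosure (ZMod p))) V,
      (∀ x ∈ W, φV x ∈ W) → W = ⊥ ∨ W = ⊤) :
    ∃ (r : ℚ) (n : ℕ) (a : AlgebraicClosure (ZMod p)), r.den.Coprime b ∧ a ≠ 0 ∧
      (∃ m : ℤ,
        (n : ℚ) / ((b : ℚ) ^ (orderOf (b : ZMod r.den)) - 1) - r = (m : ℚ)) ∧
      ∃ e : V ≃ₗ[LaurentSeries (AlgebraicClosure (ZMod p))]
          (Fin (orderOf (b : ZMod r.den)) →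
            LaurentSeries (AlgebraicClosure (ZMod p))),
        ∀ x, e (φV x) = Dphi φ (orderOf (b : ZMod r.den)) n a (e x) :=
  stmt18_general b hb φ hφ1 hφ2 V φV hadd hsemi hetale hsimple
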